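/- arXiv:1707.08087 — 2 statements merged into one kernel-verified Lean document; each statement's English description precedes it below -/
import Mathlib

section
/- Let q be a quadratic form over k and a ∈ k a nonzero scalar. Suppose q ≅ m·ℍ ⊥ r with r anisotropic, and q ⊥ ⟨a⟩ ≅ m'·ℍ ⊥ r' with r' anisotropic. Then the dimensions of the anisotropic parts differ by exactly one: either dim r' = dim r + 1 or dim r = dim r' + 1. (This is the paper's claim that dim((q')_{an}) − dim(q_{an}) = ±1 for q' = q ⊥ ⟨a⟩.) -/
open QuadraticMap

/-- The one-dimensional quadratic form `⟨a⟩ : x ↦ a·x²`. -/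
noncomputable def oneForm (k : Type*) [Field k] (a : k) : QuadraticForm k k :=
  a • QuadraticMap.sq

/-- The hyperbolic plane `ℍ : (x, y) ↦ x² − y²`. -/
noncomputable def hypPlane (k : Type*) [Field k] : QuadraticForm k (k × k) :=
  (oneForm k 1).prod (oneForm k (-1))

/-- `n·ℍ`, the orthogonal sum of `n` copies of the hyperbolic plane. -/
noncomputable def hyps (k : Type*) [Field k] (n : ℕ) :
    QuadraticForm k (Fin n → k × k) :=
  QuadraticMap.pi fun _ => hypPlane k

/-!
All maximal totally isotropic subspaces of a quadratic space have the same dimension, the Witt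
index. In `m·ℍ ⊥ r` with `r` anisotropic, the diagonal lines of the `m` hyperbolic planes span a
maximal one, so the Witt index is `m` and the anisotropic part of a form `q` has dimension
`dim q - 2 * wittIndex q`. Adding a form `s` raises the Witt index by at most `dim s`, because a
totally isotropic subspace of `q ⊥ s` meets `q` in codimension at most `dim s`. For `s = ⟨a⟩` the
index grows by `0` or `1`, and the dimension of the anisotropic part changes by `+1` or `-1`.
-/

/-- A subspace on which the quadratic form `q` vanishes identically. In characteristic two such
subspaces are usually called totally singular. -/
def IsTotallyIsotropic {k V : Type*} [Field k] [AddCommGroup V] [Module k V]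
    (q : QuadraticForm k V) (L : Submodule k V) : Prop :=
  ∀ x ∈ L, q x = 0

/-- The Witt index of `q`: the largest dimension of a totally isotropic subspace. It is meaningful
when these dimensions are bounded, in particular when `V` is finite-dimensional; otherwise the
supremum takes the junk value `0`. -/
noncomputable def wittIndex {k V : Type*} [Field k] [AddCommGroup V] [Module k V]
    (q : QuadraticForm k V) : ℕ :=
  sSup {n | ∃ L : Submodule k V, IsTotallyIsotropic q L ∧ Module.finrank k L = n}

section TotallyIsotropic

variable {k V V' : Type*} [Field k] [AddCommGroup V] [Module k V] [AddCommGroup V'] [Module k V']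
  {q : QuadraticForm k V} {q' : QuadraticForm k V'} {L D : Submodule k V} {x y : V}

namespace IsTotallyIsotropic

lemma polar_eq_zero (hL : IsTotallyIsotropic q L) (hx : x ∈ L) (hy : y ∈ L) :
    polar q x y = 0 := by
  simp [polar, hL _ (L.add_mem hx hy), hL x hx, hL y hy]

lemma sup_span_singleton (hD : IsTotallyIsotropic q D) (hx : q x = 0)
    (horth : ∀ y ∈ D, polar q x y = 0) : IsTotallyIsotropic q (D ⊔ k ∙ x) := by
  intro z hz
  obtain ⟨y, hy, w, hw, rfl⟩ := Submodule.mem_sup.1 hz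
  obtain ⟨c, rfl⟩ := Submodule.mem_span_singleton.1 hw
  rw [QuadraticMap.map_add q, hD y hy, QuadraticMap.map_smul, hx, polar_smul_right, polar_comm,
    horth y hy]
  simp

lemma mem_of_maximal (hD : Maximal (IsTotallyIsotropic q) D) (hx : q x = 0)
    (horth : ∀ y ∈ D, polar q x y = 0) : x ∈ D :=
  hD.2 (hD.1.sup_span_singleton hx horth) le_sup_left
    (Submodule.mem_sup_right (Submodule.mem_span_singleton_self x))

-- The polar form pairs `L / (L ⊓ D)` with `D / (L ⊓ D)`, and by maximality of `D` the pairing has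
-- no kernel on the `L` side.
lemma finrank_le_of_maximal [FiniteDimensional k D] (hL : IsTotallyIsotropic q L)
    (hD : Maximal (IsTotallyIsotropic q) D) : Module.finrank k L ≤ Module.finrank k D := by
  by_cases hfin : FiniteDimensional k L
  swap
  · simp [Module.finrank_of_not_finite hfin]
  let pairing : L →ₗ[k] Module.Dual k D := q.polarBilin.domRestrict₁₂ L D
  have ker_le : LinearMap.ker pairing ≤ D.comap L.subtype := by
    intro x hx
    exact Submodule.mem_comap.2 <| mem_of_maximal hD (hL x x.2) fun y hy =>
      LinearMap.congr_fun (LinearMap.mem_ker.1 hx) ⟨y, hy⟩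
  have range_le : LinearMap.range pairing ≤ (L.comap D.subtype).dualAnnihilator := by
    rintro _ ⟨x, rfl⟩
    exact (Submodule.mem_dualAnnihilator _).2 fun y hy => hL.polar_eq_zero x.2 hy
  have finrank_comap_comm :
      Module.finrank k (D.comap L.subtype) = Module.finrank k (L.comap D.subtype) := by
    rw [← Submodule.finrank_map_subtype_eq, ← Submodule.finrank_map_subtype_eq,
      Submodule.map_comap_subtype, Submodule.map_comap_subtype, inf_comm]
  calc Module.finrank k L
      = Module.finrank k (LinearMap.range pairing) + Module.finrank k (LinearMap.ker pairing) :=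
        (LinearMap.finrank_range_add_finrank_ker pairing).symm
    _ ≤ Module.finrank k (L.comap D.subtype).dualAnnihilator +
          Module.finrank k (D.comap L.subtype) :=
        add_le_add (Submodule.finrank_mono range_le) (Submodule.finrank_mono ker_le)
    _ = Module.finrank k D := by
        rw [finrank_comap_comm, add_comm, Subspace.finrank_add_finrank_dualAnnihilator_eq]

lemma wittIndex_eq_of_maximal [FiniteDimensional k D] (hD : Maximal (IsTotallyIsotropic q) D) :
    wittIndex q = Module.finrank k D :=
  IsGreatest.csSup_eq ⟨⟨D, hD.1, rfl⟩, by
    rintro _ ⟨L, hL, rfl⟩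
    exact hL.finrank_le_of_maximal hD⟩

lemma finrank_le_wittIndex [FiniteDimensional k V] (hL : IsTotallyIsotropic q L) :
    Module.finrank k L ≤ wittIndex q := by
  refine le_csSup ⟨Module.finrank k V, ?_⟩ ⟨L, hL, rfl⟩
  rintro _ ⟨M, -, rfl⟩
  exact M.finrank_le

lemma map (hL : IsTotallyIsotropic q L) (f : q →qᵢ q') :
    IsTotallyIsotropic q' (L.map f.toLinearMap) := by
  rintro _ ⟨x, hx, rfl⟩
  exact (f.map_app x).trans (hL x hx)

lemma comap {L : Submodule k V'} (hL : IsTotallyIsotropic q' L) (f : q →qᵢ q') :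
    IsTotallyIsotropic q (L.comap f.toLinearMap) :=
  fun x hx => (f.map_app x).symm.trans (hL _ hx)

end IsTotallyIsotropic

end TotallyIsotropic

section WittIndex

variable {k V V' U : Type*} [Field k] [AddCommGroup V] [Module k V] [AddCommGroup V'] [Module k V']
  [AddCommGroup U] [Module k U]

lemma wittIndex_le {q : QuadraticForm k V} {n : ℕ}
    (h : ∀ L, IsTotallyIsotropic q L → Module.finrank k L ≤ n) : wittIndex q ≤ n :=
  csSup_le' <| by
    rintro _ ⟨L, hL, rfl⟩
    exact h L hL

lemma wittIndex_le_of_injective [FiniteDimensional k V'] {q : QuadraticForm k V}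
    {q' : QuadraticForm k V'} (f : q →qᵢ q') (hf : Function.Injective f) :
    wittIndex q ≤ wittIndex q' :=
  wittIndex_le fun L hL =>
    (Submodule.equivMapOfInjective f.toLinearMap hf L).finrank_eq.trans_le
      (hL.map f).finrank_le_wittIndex

lemma wittIndex_eq_of_equivalent [FiniteDimensional k V] {q : QuadraticForm k V}
    {q' : QuadraticForm k V'} (h : q.Equivalent q') : wittIndex q = wittIndex q' := by
  obtain ⟨e⟩ := h
  have : FiniteDimensional k V' := Module.Finite.equiv e.toLinearEquiv
  exact le_antisymm (wittIndex_le_of_injective e.toIsometry e.injective)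
    (wittIndex_le_of_injective e.symm.toIsometry e.symm.injective)

variable [FiniteDimensional k V] [FiniteDimensional k U]

lemma wittIndex_le_wittIndex_prod (q : QuadraticForm k V) (s : QuadraticForm k U) :
    wittIndex q ≤ wittIndex (q.prod s) :=
  wittIndex_le_of_injective (QuadraticMap.Isometry.inl q s) LinearMap.inl_injective

lemma finrank_le_finrank_comap_inl_add (L : Submodule k (V × U)) :
    Module.finrank k L ≤ Module.finrank k (L.comap (LinearMap.inl k V U)) + Module.finrank k U := by
  let proj : L →ₗ[k] U := (LinearMap.snd k V U).domRestrict L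
  have ker_le : (LinearMap.ker proj).map L.subtype ≤
      (L.comap (LinearMap.inl k V U)).map (LinearMap.inl k V U) := by
    rintro _ ⟨⟨⟨v, u⟩, hL⟩, rfl : u = 0, rfl⟩
    exact ⟨v, hL, rfl⟩
  calc Module.finrank k L
      = Module.finrank k (LinearMap.ker proj) + Module.finrank k (LinearMap.range proj) := by
        rw [add_comm, LinearMap.finrank_range_add_finrank_ker]
    _ ≤ Module.finrank k (L.comap (LinearMap.inl k V U)) + Module.finrank k U := by
        rw [← Submodule.finrank_map_subtype_eq]
        exact add_le_add ((Submodule.finrank_mono ker_le).trans (Submodule.finrank_map_le _ _))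
          (Submodule.finrank_le _)

lemma wittIndex_prod_le (q : QuadraticForm k V) (s : QuadraticForm k U) :
    wittIndex (q.prod s) ≤ wittIndex q + Module.finrank k U :=
  wittIndex_le fun L hL => (finrank_le_finrank_comap_inl_add L).trans <|
    Nat.add_le_add_right (hL.comap (QuadraticMap.Isometry.inl q s)).finrank_le_wittIndex _

end WittIndex

section HyperbolicSum

variable {k : Type*} [Field k]

@[simp]
lemma hypPlane_apply (x : k × k) : hypPlane k x = x.1 * x.1 - x.2 * x.2 := by
  simp [hypPlane, oneForm, sub_eq_add_neg]

lemma polar_hypPlane_diag (x : k × k) (c : k) :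
    polar (hypPlane k) x (c, c) = 2 * (x.1 - x.2) * c := by
  simp only [polar, hypPlane_apply, Prod.fst_add, Prod.snd_add]
  ring

/-- The subspace `{((zᵢ, zᵢ)ᵢ, 0)}` of `m·ℍ ⊥ W`, spanned by one isotropic line `x = y` from each
hyperbolic plane. -/
def hypsDiagonal (k W : Type*) [Field k] [AddCommGroup W] [Module k W] (m : ℕ) :
    Submodule k ((Fin m → k × k) × W) :=
  LinearMap.range (LinearMap.inl k (Fin m → k × k) W ∘ₗ
    (LinearMap.id.prod LinearMap.id : k →ₗ[k] k × k).compLeft (Fin m))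

variable {V W : Type*} [AddCommGroup V] [Module k V] [AddCommGroup W] [Module k W]
  {r : QuadraticForm k W} {m : ℕ}

lemma mem_hypsDiagonal {x : (Fin m → k × k) × W} :
    x ∈ hypsDiagonal k W m ↔ (∀ i, (x.1 i).1 = (x.1 i).2) ∧ x.2 = 0 := by
  constructor
  · rintro ⟨z, rfl⟩
    exact ⟨fun _ => rfl, rfl⟩
  · rintro ⟨hdiag, hW⟩
    exact ⟨fun i => (x.1 i).1,
      Prod.ext (funext fun i => Prod.ext rfl (hdiag i)) hW.symm⟩

instance : FiniteDimensional k (hypsDiagonal k W m) :=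
  LinearMap.finiteDimensional_range _

variable (k W m) in
lemma finrank_hypsDiagonal : Module.finrank k (hypsDiagonal k W m) = m := by
  rw [hypsDiagonal, LinearMap.finrank_range_of_inj, Module.finrank_fin_fun]
  refine LinearMap.inl_injective.comp fun z z' h => funext fun i => ?_
  exact congrArg Prod.fst (congrFun h i)

variable (r m) in
lemma isTotallyIsotropic_hypsDiagonal :
    IsTotallyIsotropic ((hyps k m).prod r) (hypsDiagonal k W m) := by
  intro x hx
  obtain ⟨hdiag, hW⟩ := mem_hypsDiagonal.1 hx
  simp [hyps, hdiag, hW]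

lemma polar_hyps_prod_single_diag (x : (Fin m → k × k) × W) (i : Fin m) :
    polar ((hyps k m).prod r) x (Pi.single i (1, 1), 0) = 2 * ((x.1 i).1 - (x.1 i).2) := by
  rw [polar_prod, hyps, Ring.polar_pi, polar_zero_right, add_zero, Finset.sum_eq_single i]
  · simp [polar_hypPlane_diag]
  · intro j _ hj
    simp [hj]
  · simp

lemma maximal_hypsDiagonal (h2 : (2 : k) ≠ 0) (hr : r.Anisotropic) :
    Maximal (IsTotallyIsotropic ((hyps k m).prod r)) (hypsDiagonal k W m) := by
  refine ⟨isTotallyIsotropic_hypsDiagonal r m, fun L hL hle x hx => ?_⟩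
  have hdiag (i : Fin m) : (x.1 i).1 = (x.1 i).2 := by
    have hmem : (Pi.single i (1, 1), 0) ∈ hypsDiagonal k W m := by
      refine mem_hypsDiagonal.2 ⟨fun j => ?_, rfl⟩
      obtain rfl | hj := eq_or_ne j i <;> simp [*]
    have horth := hL.polar_eq_zero hx (hle hmem)
    rw [polar_hyps_prod_single_diag] at horth
    exact sub_eq_zero.1 ((mul_eq_zero.1 horth).resolve_left h2)
  have hrx : r x.2 = 0 := by
    simpa [hyps, hdiag] using hL x hx
  exact mem_hypsDiagonal.2 ⟨hdiag, hr _ hrx⟩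

lemma wittIndex_hyps_prod (h2 : (2 : k) ≠ 0) (hr : r.Anisotropic) :
    wittIndex ((hyps k m).prod r) = m :=
  (IsTotallyIsotropic.wittIndex_eq_of_maximal (maximal_hypsDiagonal h2 hr)).trans
    (finrank_hypsDiagonal k W m)

lemma finrank_eq_two_mul_wittIndex_add [FiniteDimensional k V] {q : QuadraticForm k V}
    (h2 : (2 : k) ≠ 0) (hq : q.Equivalent ((hyps k m).prod r)) (hr : r.Anisotropic) :
    Module.finrank k V = 2 * wittIndex q + Module.finrank k W := by
  rw [wittIndex_eq_of_equivalent hq, wittIndex_hyps_prod h2 hr]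
  obtain ⟨e⟩ := hq
  have : FiniteDimensional k ((Fin m → k × k) × W) := Module.Finite.equiv e.toLinearEquiv
  have : FiniteDimensional k W :=
    Module.Finite.of_surjective (LinearMap.snd k (Fin m → k × k) W) LinearMap.snd_surjective
  rw [e.toLinearEquiv.finrank_eq, Module.finrank_prod, Module.finrank_pi_fintype]
  simp [mul_comm]

end HyperbolicSum

theorem anisotropic_part_dim_add_one_dim_general
    {k : Type*} [Field k] (h2 : (2 : k) ≠ 0)
    {V U W W' : Type*} [AddCommGroup V] [Module k V] [FiniteDimensional k V]
    [AddCommGroup U] [Module k U] [FiniteDimensional k U]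
    [AddCommGroup W] [Module k W] [AddCommGroup W'] [Module k W']
    {q : QuadraticForm k V} {s : QuadraticForm k U}
    {r : QuadraticForm k W} {r' : QuadraticForm k W'} {m m' : ℕ}
    (hq : q.Equivalent ((hyps k m).prod r)) (hr : r.Anisotropic)
    (hqs : (q.prod s).Equivalent ((hyps k m').prod r')) (hr' : r'.Anisotropic) :
    ∃ i ≤ Module.finrank k U,
      Module.finrank k W' + 2 * i = Module.finrank k W + Module.finrank k U := by
  have dim_q := finrank_eq_two_mul_wittIndex_add h2 hq hr
  have dim_qs := finrank_eq_two_mul_wittIndex_add h2 hqs hr'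
  rw [Module.finrank_prod] at dim_qs
  have index_le := wittIndex_le_wittIndex_prod q s
  have le_index_add := wittIndex_prod_le q s
  exact ⟨wittIndex (q.prod s) - wittIndex q, by lia, by lia⟩

/-- The dimensions of the anisotropic parts of `q` and `q ⊥ ⟨a⟩` differ by
exactly one: if `q ≅ m·ℍ ⊥ r` with `r` anisotropic and
`q ⊥ ⟨a⟩ ≅ m'·ℍ ⊥ r'` with `r'` anisotropic, then
`dim r' = dim r + 1` or `dim r = dim r' + 1`. -/
theorem anisotropic_part_dim_add_one_dim
    {k : Type*} [Field k] (hchar : (2 : k) ≠ 0)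
    {V W W' : Type*} [AddCommGroup V] [Module k V] [FiniteDimensional k V]
    [AddCommGroup W] [Module k W] [FiniteDimensional k W]
    [AddCommGroup W'] [Module k W'] [FiniteDimensional k W']
    (q : QuadraticForm k V) (r : QuadraticForm k W) (r' : QuadraticForm k W')
    (a : k) (ha : a ≠ 0) (m m' : ℕ)
    (hq : q.Equivalent ((hyps k m).prod r)) (hr : r.Anisotropic)
    (hq' : (q.prod (oneForm k a)).Equivalent ((hyps k m').prod r'))
    (hr' : r'.Anisotropic) :
    Module.finrank k W' = Module.finrank k W + 1 ∨
      Module.finrank k W = Module.finrank k W' + 1 := by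
  obtain ⟨i, hi, hdim⟩ := anisotropic_part_dim_add_one_dim_general hchar hq hr hq' hr'
  rw [Module.finrank_self] at hi hdim
  lia
end

section
/- Let q be a quadratic form over k of odd dimension 2m+1, and let a, λ ∈ k be nonzero scalars. If both q ⊥ ⟨a⟩ and (λ·q) ⊥ ⟨a⟩ are hyperbolic, i.e. q ⊥ ⟨a⟩ ≅ (m+1)·ℍ and (λ·q) ⊥ ⟨a⟩ ≅ (m+1)·ℍ, then λ is a square in k. (This is the algebraic heart of the paper's final step: if q' and λ·p' split over the same field, then the Pfister form ⟨⟨λ⟩⟩ = ±(q' − λp') is split there, forcing λ to be a square.) -/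
open QuadraticMap

/-!
Over a field of characteristic not two, the discriminant of a nondegenerate form is a nonzero
scalar that depends, up to squares, only on the isometry class. It is multiplicative for `⊥`, and
scaling `q` by `l` multiplies it by `l ^ dim q`. An isometry `(l • q) ⊥ r ≅ q ⊥ r` thus makes
`l ^ dim q` a square, and so `l` itself when `dim q` is odd.
-/

theorem isSquare_of_isSquare_odd_pow {G₀ : Type*} [CommGroupWithZero G₀] {n : ℕ} (hn : Odd n)
    {x : G₀} (h : IsSquare (x ^ n)) : IsSquare x := by
  obtain rfl | hx := eq_or_ne x 0
  · exact IsSquare.zero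
  obtain ⟨m, rfl⟩ := hn
  have hdiv : x ^ (2 * m + 1) / x ^ (2 * m) = x := by
    rw [pow_succ, mul_div_cancel_left₀ _ (pow_ne_zero _ hx)]
  exact hdiv ▸ h.div ((even_two_mul m).isSquare_pow x)

section Radical

variable {R M N P : Type*} [CommRing R] [AddCommGroup M] [AddCommGroup N] [AddCommGroup P]
  [Module R M] [Module R N] [Module R P]

theorem radical_eq_bot_of_anisotropic {Q : QuadraticMap R M P} (hQ : Q.Anisotropic) :
    Q.radical = ⊥ :=
  (Submodule.eq_bot_iff _).2 fun x hx => hQ x (mem_radical_iff'.1 hx).1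

variable [Invertible (2 : R)]

theorem mem_radical_iff_polar_eq_zero {Q : QuadraticMap R M P} {x : M} :
    x ∈ Q.radical ↔ ∀ y, polar Q x y = 0 := by
  simp [radical_eq_ker_polarBilin, LinearMap.ext_iff]

theorem radical_prod (Q₁ : QuadraticMap R M P) (Q₂ : QuadraticMap R N P) :
    (Q₁.prod Q₂).radical = Q₁.radical.prod Q₂.radical := by
  ext x
  simp only [Submodule.mem_prod, mem_radical_iff_polar_eq_zero, polar_prod]
  refine ⟨fun h => ⟨fun y => ?_, fun y => ?_⟩, fun h y => by rw [h.1, h.2, add_zero]⟩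
  · simpa using h (y, 0)
  · simpa using h (0, y)

theorem radical_pi {ι : Type*} [Fintype ι] {M : ι → Type*} [∀ i, AddCommGroup (M i)]
    [∀ i, Module R (M i)] (Q : ∀ i, QuadraticMap R (M i) P) :
    (QuadraticMap.pi Q).radical = Submodule.pi Set.univ fun i => (Q i).radical := by
  classical
  ext x
  simp only [Submodule.mem_pi, Set.mem_univ, true_imp_iff, mem_radical_iff_polar_eq_zero,
    Ring.polar_pi]
  refine ⟨fun h i y => ?_, fun h y => Finset.sum_eq_zero fun i _ => h i (y i)⟩
  have hsingle := h (Pi.single i y)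
  rwa [Finset.sum_eq_single i (fun j _ hj => by simp [hj]) (by simp), Pi.single_eq_same] at hsingle

theorem nondegenerate_of_equivalent {Q₁ : QuadraticMap R M P} {Q₂ : QuadraticMap R N P}
    (h : Q₁.Equivalent Q₂) (hQ₁ : Q₁.Nondegenerate) : Q₂.Nondegenerate := by
  obtain ⟨e⟩ := h
  rw [nondegenerate_iff_radical_eq_bot, ← e.map_radical, hQ₁.radical_eq_bot, Submodule.map_bot]

end Radical

section Hyperbolic

variable {k : Type*} [Field k]

theorem anisotropic_oneForm {a : k} (ha : a ≠ 0) : (oneForm k a).Anisotropic := by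
  intro x hx
  simpa [oneForm, ha] using hx

variable [Invertible (2 : k)]

theorem radical_hypPlane : (hypPlane k).radical = ⊥ := by
  rw [hypPlane, radical_prod, radical_eq_bot_of_anisotropic (anisotropic_oneForm one_ne_zero),
    radical_eq_bot_of_anisotropic (anisotropic_oneForm (neg_ne_zero.2 one_ne_zero)),
    Submodule.prod_bot]

theorem nondegenerate_hyps (n : ℕ) : (hyps k n).Nondegenerate := by
  rw [nondegenerate_iff_radical_eq_bot, hyps, radical_pi, radical_hypPlane, Submodule.pi_univ_bot]

end Hyperbolic

section Discriminant

variable {R M N m n : Type*} [CommRing R] [Invertible (2 : R)] [AddCommGroup M] [AddCommGroup N]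
  [Module R M] [Module R N] [Fintype m] [DecidableEq m] [Fintype n] [DecidableEq n]

theorem discr_ne_zero_iff_nondegenerate [IsDomain R] (b : Module.Basis n R M)
    (Q : QuadraticForm R M) : Q.discr b ≠ 0 ↔ Q.Nondegenerate :=
  (LinearMap.nondegenerate_iff_det_ne_zero b).symm.trans nondegenerate_associated_iff

theorem exists_discr_eq_unit_sq_mul_discr {Q₁ : QuadraticForm R M} {Q₂ : QuadraticForm R N}
    (h : Q₁.Equivalent Q₂) (b₁ : Module.Basis n R M) (b₂ : Module.Basis n R N) :
    ∃ u : Rˣ, Q₁.discr b₁ = u ^ 2 * Q₂.discr b₂ := by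
  obtain ⟨e⟩ := h
  have hcomp : Q₂.comp (e.toLinearEquiv : M →ₗ[R] N) = Q₁ := QuadraticMap.ext e.map_app
  have hdiscr := QuadraticForm.discr_comp (b := b₁) b₂ Q₂ (e.toLinearEquiv : M →ₗ[R] N)
  rw [hcomp, ← pow_two] at hdiscr
  exact ⟨(e.toLinearEquiv.isUnit_det b₁ b₂).unit, hdiscr⟩

theorem toMatrix_prod (b : Module.Basis m R M) (c : Module.Basis n R N)
    (Q₁ : QuadraticForm R M) (Q₂ : QuadraticForm R N) :
    QuadraticForm.toMatrix (b.prod c) (Q₁.prod Q₂) =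
      Matrix.fromBlocks (Q₁.toMatrix b) 0 0 (Q₂.toMatrix c) := by
  ext (i | i) (j | j) <;> simp [QuadraticForm.toMatrix, LinearMap.toMatrix₂_apply]

theorem discr_prod (b : Module.Basis m R M) (c : Module.Basis n R N)
    (Q₁ : QuadraticForm R M) (Q₂ : QuadraticForm R N) :
    QuadraticForm.discr (b.prod c) (Q₁.prod Q₂) = Q₁.discr b * Q₂.discr c := by
  rw [QuadraticForm.discr, toMatrix_prod, Matrix.det_fromBlocks_zero₂₁, QuadraticForm.discr,
    QuadraticForm.discr]

end Discriminant

theorem scalar_is_square_of_both_hyperbolic_general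
    {k V W : Type*} [Field k] [Invertible (2 : k)] [AddCommGroup V] [Module k V]
    [AddCommGroup W] [Module k W] [FiniteDimensional k W]
    {q : QuadraticForm k V} {r : QuadraticForm k W} {l : k} (hdim : Odd (Module.finrank k V))
    (hqr : (q.prod r).Nondegenerate) (h : ((l • q).prod r).Equivalent (q.prod r)) :
    IsSquare l := by
  have : FiniteDimensional k V := Module.finite_of_finrank_pos hdim.pos
  let b := Module.finBasis k V
  let c := Module.finBasis k W
  have hd : q.discr b * r.discr c ≠ 0 := by
    rwa [← discr_prod, discr_ne_zero_iff_nondegenerate]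
  obtain ⟨u, hu⟩ := exists_discr_eq_unit_sq_mul_discr h (b.prod c) (b.prod c)
  rw [discr_prod, discr_prod, QuadraticForm.discr_smul, Fintype.card_fin, mul_assoc] at hu
  have hpow : l ^ Module.finrank k V = (u : k) ^ 2 := mul_right_cancel₀ hd hu
  exact isSquare_of_isSquare_odd_pow hdim (hpow ▸ IsSquare.sq (u : k))

/-- If `q` has odd dimension `2m+1` and both `q ⊥ ⟨a⟩` and `(λ·q) ⊥ ⟨a⟩`
are hyperbolic (equivalent to `(m+1)·ℍ`), then `λ` is a square in `k`. -/
theorem scalar_is_square_of_both_hyperbolic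
    {k : Type*} [Field k] (hchar : (2 : k) ≠ 0)
    {V : Type*} [AddCommGroup V] [Module k V] [FiniteDimensional k V]
    (q : QuadraticForm k V) (m : ℕ) (hdim : Module.finrank k V = 2 * m + 1)
    (a l : k) (ha : a ≠ 0) (hl : l ≠ 0)
    (hq : (q.prod (oneForm k a)).Equivalent (hyps k (m + 1)))
    (hlq : ((l • q).prod (oneForm k a)).Equivalent (hyps k (m + 1))) :
    IsSquare l := by
  have : Invertible (2 : k) := invertibleOfNonzero hchar
  exact scalar_is_square_of_both_hyperbolic_general ⟨m, hdim⟩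
    (nondegenerate_of_equivalent hq.symm (nondegenerate_hyps _)) (hlq.trans hq.symm)
end
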